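/- Let K be a field with char K ≠ 2, V a K-vector space, and ξ a nonzero reflexive bilinear form on V (ξ(u,v) = 0 iff ξ(v,u) = 0). Let h₀ be a hyperplane of the projective space ℙ(V), and assume h₀ is not contained in the set of self-conjugate points {⟨u⟩ : ξ(u,u) = 0}. Then the set H = {2x : x ∈ h₀} ∪ {⟨u⟩ + ⟨v⟩ : u, v ∈ V∖{0}, ξ(u,v) = 0} is NOT a subspace of the Veronese space V₂(ℙ(V)). -/

import Mathlib

def veroBlock {S : Type*} (e : Multiset S) (r : ℕ) (B : Set S) : Set (Multiset S) :=
  { m | ∃ x ∈ B, m = e + Multiset.replicate r x }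

def veroBlocks {S : Type*} (k : ℕ) (L : Set (Set S)) : Set (Set (Multiset S)) :=
  { Bl | ∃ (r : ℕ) (e : Multiset S) (B : Set S),
      0 < r ∧ r ≤ k ∧ Multiset.card e = k - r ∧ B ∈ L ∧ Bl = veroBlock e r B }

def veroPoints (S : Type*) (k : ℕ) : Set (Multiset S) :=
  { m | Multiset.card m = k }

def veroLeaves (S : Type*) (k : ℕ) : Set (Set (Multiset S)) :=
  { T | ∃ (r : ℕ) (e : Multiset S),
      0 < r ∧ r ≤ k ∧ Multiset.card e = k - r ∧ T = veroBlock e r Set.univ }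

def VerAdj {S : Type*} (k : ℕ) (L : Set (Set S)) (f g : Multiset S) : Prop :=
  ∃ Bl ∈ veroBlocks k L, f ∈ Bl ∧ g ∈ Bl

def AtLeastThree {α : Type*} (B : Set α) : Prop :=
  ∃ a b c, a ∈ B ∧ b ∈ B ∧ c ∈ B ∧ a ≠ b ∧ a ≠ c ∧ b ≠ c

def IsPLS {α : Type*} (L : Set (Set α)) : Prop :=
  L.Nonempty ∧ (∀ B ∈ L, AtLeastThree B) ∧
    ∀ p q : α, p ≠ q → ∀ B₁ ∈ L, ∀ B₂ ∈ L,
      p ∈ B₁ → q ∈ B₁ → p ∈ B₂ → q ∈ B₂ → B₁ = B₂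

def IsLinearSpace {α : Type*} (L : Set (Set α)) : Prop :=
  IsPLS L ∧ ∀ p q : α, p ≠ q → ∃ B ∈ L, p ∈ B ∧ q ∈ B

def IsSubspace {α : Type*} (Blk : Set (Set α)) (X : Set α) : Prop :=
  ∀ B ∈ Blk, (∃ p ∈ B ∩ X, ∃ q ∈ B ∩ X, p ≠ q) → B ⊆ X

def IsHyperplane {α : Type*} (L : Set (Set α)) (X : Set α) : Prop :=
  IsSubspace L X ∧ (∀ B ∈ L, (B ∩ X).Nonempty) ∧ X ≠ Set.univ

def Veblenian {α : Type*} (L : Set (Set α)) : Prop :=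
  ∀ (p : α) (L₁ L₂ M₁ M₂ : Set α), L₁ ∈ L → L₂ ∈ L → M₁ ∈ L → M₂ ∈ L →
    L₁ ≠ L₂ → L₁ ≠ M₁ → L₁ ≠ M₂ → L₂ ≠ M₁ → L₂ ≠ M₂ → M₁ ≠ M₂ →
    p ∈ L₁ → p ∈ L₂ → p ∉ M₁ → p ∉ M₂ →
    (L₁ ∩ M₁).Nonempty → (L₁ ∩ M₂).Nonempty →
    (L₂ ∩ M₁).Nonempty → (L₂ ∩ M₂).Nonempty →
    (M₁ ∩ M₂).Nonempty

def IsVeroHyperplane {S : Type*} (k : ℕ) (L : Set (Set S)) (X : Set (Multiset S)) : Prop :=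
  X ⊆ veroPoints S k ∧ X ≠ veroPoints S k ∧
    IsSubspace (veroBlocks k L) X ∧ ∀ B ∈ veroBlocks k L, (B ∩ X).Nonempty

def addPt {S : Type*} (a : S) (m : Set S) : Set (Multiset S) :=
  { t | ∃ x ∈ m, t = ({a, x} : Multiset S) }

def dbl {S : Type*} (m : Set S) : Set (Multiset S) :=
  { t | ∃ x ∈ m, t = ({x, x} : Multiset S) }

def projLines (K V : Type*) [Field K] [AddCommGroup V] [Module K V] :
    Set (Set (Projectivization K V)) :=
  { L | ∃ W : Submodule K V, Module.finrank K ↥W = 2 ∧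
      L = { p : Projectivization K V | p.submodule ≤ W } }

def Hxi {K V : Type*} [Field K] [AddCommGroup V] [Module K V]
    (ξ : V →ₗ[K] V →ₗ[K] K) : Set (Multiset (Projectivization K V)) :=
  { m | ∃ (u v : V) (hu : u ≠ 0) (hv : v ≠ 0), ξ u v = 0 ∧
      m = ({Projectivization.mk K u hu, Projectivization.mk K v hv} :
        Multiset (Projectivization K V)) }

/-!
Let `p = ⟨u⟩` be a point of `h₀` with `ξ u u ≠ 0`. If the set in question were a subspace, then so
would be the set of points `q` with `p + q` in it. That set is `p` together with its polar
hyperplane `{⟨v⟩ | ξ u v = 0}`, which does not contain `p`. But the line joining `p` to a point of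
the polar has a third point, and this is neither `p` nor in the polar.
-/

open scoped LinearAlgebra.Projectivization

lemma multiset_pair_eq_pair_iff {α : Type*} {a b c d : α} :
    ({a, b} : Multiset α) = {c, d} ↔ a = c ∧ b = d ∨ a = d ∧ b = c :=
  Multiset.coe_eq_coe.trans (by simp [List.perm_pair])

lemma nontrivial_of_nonempty_of_ne_univ {α : Type*} {s : Set α} (hs : s.Nonempty)
    (hne : s ≠ Set.univ) : Nontrivial α := by
  obtain ⟨p, hp⟩ := hs
  obtain ⟨q, hq⟩ := (Set.ne_univ_iff_exists_notMem s).1 hne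
  exact ⟨p, q, ne_of_mem_of_not_mem hp hq⟩

section VeroneseSpace

variable {S : Type*} {k : ℕ} {L : Set (Set S)}

lemma IsSubspace.setOf_add_replicate_mem {X : Set (Multiset S)} (hX : IsSubspace (veroBlocks k L) X)
    {e : Multiset S} {r : ℕ} (hr : 0 < r) (hk : e.card + r = k) :
    IsSubspace L {x | e + Multiset.replicate r x ∈ X} := by
  rintro B hB ⟨x, ⟨hxB, hxX⟩, y, ⟨hyB, hyX⟩, hxy⟩ z hz
  have hblock : veroBlock e r B ∈ veroBlocks k L :=
    ⟨r, e, B, hr, by omega, by omega, hB, rfl⟩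
  have hne : e + Multiset.replicate r x ≠ e + Multiset.replicate r y := by
    simpa [hr.ne'] using hxy
  exact hX _ hblock ⟨_, ⟨⟨x, hxB, rfl⟩, hxX⟩, _, ⟨⟨y, hyB, rfl⟩, hyX⟩, hne⟩ ⟨z, hz, rfl⟩

lemma IsSubspace.setOf_pair_mem {X : Set (Multiset S)} (hX : IsSubspace (veroBlocks 2 L) X)
    (p : S) : IsSubspace L {q | ({p, q} : Multiset S) ∈ X} :=
  hX.setOf_add_replicate_mem (e := {p}) one_pos (by simp)

lemma pair_mem_dbl_iff {m : Set S} {p q : S} :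
    ({p, q} : Multiset S) ∈ dbl m ↔ p ∈ m ∧ q = p := by
  constructor
  · rintro ⟨x, hx, h⟩
    rcases multiset_pair_eq_pair_iff.1 h with ⟨rfl, rfl⟩ | ⟨rfl, rfl⟩ <;> exact ⟨hx, rfl⟩
  · rintro ⟨hp, rfl⟩
    exact ⟨q, hp, rfl⟩

end VeroneseSpace

section ProjectiveSpace

variable {K V : Type*} [Field K] [AddCommGroup V] [Module K V]

lemma setOf_submodule_le_span_pair_mem_projLines {u v : V} (h : LinearIndependent K ![u, v]) :
    {p : ℙ K V | p.submodule ≤ Submodule.span K {u, v}} ∈ projLines K V := by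
  refine ⟨_, ?_, rfl⟩
  rw [← Matrix.range_cons_cons_empty u v ![], finrank_span_eq_card h, Fintype.card_fin]

lemma IsSubspace.mk_add_mem {X : Set (ℙ K V)} (hX : IsSubspace (projLines K V) X)
    {u v : V} {hu : u ≠ 0} {hv : v ≠ 0} (huv : u + v ≠ 0)
    (huX : Projectivization.mk K u hu ∈ X) (hvX : Projectivization.mk K v hv ∈ X) :
    Projectivization.mk K (u + v) huv ∈ X := by
  by_cases h : LinearIndependent K ![u, v]
  · have hne : Projectivization.mk K u hu ≠ Projectivization.mk K v hv := by
      rwa [← Projectivization.independent_pair_iff_ne,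
        Projectivization.independent_mk_iff_LinearIndependent]
    refine hX _ (setOf_submodule_le_span_pair_mem_projLines h)
      ⟨_, ⟨?_, huX⟩, _, ⟨?_, hvX⟩, hne⟩ ?_
    all_goals
      simp only [Set.mem_ofPred_eq, Projectivization.submodule_mk,
        Submodule.span_singleton_le_iff_mem, Submodule.mem_span_pair]
    · exact ⟨1, 0, by simp⟩
    · exact ⟨0, 1, by simp⟩
    · exact ⟨1, 1, by simp⟩
  · obtain ⟨c, rfl⟩ : ∃ c : K, c • u = v := by
      simpa [LinearIndependent.pair_iff' hu] using h
    have hsum : Projectivization.mk K (u + c • u) huv = Projectivization.mk K u hu :=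
      (Projectivization.mk_eq_mk_iff' ..).2 ⟨1 + c, by rw [add_smul, one_smul]⟩
    rwa [hsum]

lemma mem_projectivization_iff_rep_mem {W : Submodule K V} {p : ℙ K V} :
    p ∈ W.projectivization ↔ p.rep ∈ W := by
  rw [← W.mk_mem_projectivization_iff p.rep_nonzero, p.mk_rep]

lemma not_isSubspace_insert_projectivization {p : ℙ K V} {W : Submodule K V} (hW : W ≠ ⊥)
    (hp : p ∉ W.projectivization) :
    ¬ IsSubspace (projLines K V) (insert p (W.projectivization : Set (ℙ K V))) := by
  intro hsub
  induction p with | h u hu =>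
  obtain ⟨z, hzW, hz⟩ := W.exists_mem_ne_zero_of_ne_bot hW
  have huW : u ∉ W := by simpa using hp
  have huz : u + z ∉ W := by rwa [W.add_mem_iff_left hzW]
  have huz0 : u + z ≠ 0 := fun h => huz (h ▸ W.zero_mem)
  rcases hsub.mk_add_mem (hv := hz) huz0 (Set.mem_insert _ _)
    (Set.mem_insert_of_mem _ (by simpa using hzW)) with heq | hmem
  · obtain ⟨c, hc⟩ := (Projectivization.mk_eq_mk_iff' ..).1 heq
    have hcz : (c - 1) • u = z := by rw [sub_smul, one_smul, hc, add_sub_cancel_left]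
    have hc1 : c - 1 ≠ 0 := fun h => hz (by rw [← hcz, h, zero_smul])
    exact huW ((W.smul_mem_iff hc1).1 (hcz ▸ hzW))
  · exact huz (by simpa using hmem)

lemma ker_ne_bot_of_nontrivial_projectivization [Nontrivial (ℙ K V)] (f : V →ₗ[K] K) :
    LinearMap.ker f ≠ ⊥ := by
  intro hker
  obtain ⟨p, q, hpq⟩ := exists_pair_ne (ℙ K V)
  have hind : LinearIndependent K ![p.rep, q.rep] :=
    Projectivization.linearIndependent_pair_iff_ne.2 hpq
  simpa using (hind.map' f hker).fintype_card_le_finrank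

end ProjectiveSpace

section Conjugacy

variable {K V : Type*} [Field K] [AddCommGroup V] [Module K V] {ξ : V →ₗ[K] V →ₗ[K] K}

lemma apply_rep_mk_rep_mk_eq_zero_iff {u v : V} (hu : u ≠ 0) (hv : v ≠ 0) :
    ξ (Projectivization.mk K u hu).rep (Projectivization.mk K v hv).rep = 0 ↔ ξ u v = 0 := by
  obtain ⟨a, ha⟩ := Projectivization.exists_smul_eq_mk_rep K u hu
  obtain ⟨b, hb⟩ := Projectivization.exists_smul_eq_mk_rep K v hv
  simp [← ha, ← hb, Units.smul_def]

lemma pair_mem_Hxi_iff (hξ : ξ.IsRefl) {p q : ℙ K V} :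
    ({p, q} : Multiset (ℙ K V)) ∈ Hxi ξ ↔ ξ p.rep q.rep = 0 := by
  constructor
  · rintro ⟨u, v, hu, hv, huv, h⟩
    rcases multiset_pair_eq_pair_iff.1 h with ⟨rfl, rfl⟩ | ⟨rfl, rfl⟩
    · exact (apply_rep_mk_rep_mk_eq_zero_iff hu hv).2 huv
    · exact (apply_rep_mk_rep_mk_eq_zero_iff hv hu).2 (hξ u v huv)
  · exact fun h => ⟨p.rep, q.rep, p.rep_nonzero, q.rep_nonzero, h, by simp⟩

lemma setOf_pair_mem_dbl_union_Hxi (hξ : ξ.IsRefl) {h₀ : Set (ℙ K V)} {p : ℙ K V} (hp : p ∈ h₀) :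
    {q | ({p, q} : Multiset (ℙ K V)) ∈ dbl h₀ ∪ Hxi ξ} =
      insert p ((LinearMap.ker (ξ p.rep)).projectivization : Set (ℙ K V)) := by
  ext q
  rw [Set.mem_ofPred_eq, Set.mem_union, pair_mem_dbl_iff, pair_mem_Hxi_iff hξ, Set.mem_insert_iff,
    SetLike.mem_coe, mem_projectivization_iff_rep_mem, LinearMap.mem_ker, and_iff_right hp]

theorem stmt_10_general [Nontrivial (ℙ K V)] (hξ : ξ.IsRefl) {h₀ : Set (ℙ K V)}
    (hns : ¬ h₀ ⊆ {p | ∃ (u : V) (hu : u ≠ 0), p = Projectivization.mk K u hu ∧ ξ u u = 0}) :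
    ¬ IsSubspace (veroBlocks 2 (projLines K V)) (dbl h₀ ∪ Hxi ξ) := by
  intro hsub
  obtain ⟨p, hp, hself⟩ := Set.not_subset.1 hns
  have hpp : ξ p.rep p.rep ≠ 0 := fun h => hself ⟨p.rep, p.rep_nonzero, p.mk_rep.symm, h⟩
  have hp_notMem : p ∉ (LinearMap.ker (ξ p.rep)).projectivization :=
    mt mem_projectivization_iff_rep_mem.1 hpp
  apply not_isSubspace_insert_projectivization
    (ker_ne_bot_of_nontrivial_projectivization (ξ p.rep)) hp_notMem
  rw [← setOf_pair_mem_dbl_union_Hxi hξ hp]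
  exact hsub.setOf_pair_mem p

end Conjugacy

theorem stmt_10 {K V : Type*} [Field K] [AddCommGroup V] [Module K V]
    (hchar : (2 : K) ≠ 0)
    (ξ : V →ₗ[K] V →ₗ[K] K) (hξ : ξ ≠ 0)
    (hrefl : ∀ u v : V, ξ u v = 0 → ξ v u = 0)
    (h₀ : Set (Projectivization K V)) (hh₀ : IsHyperplane (projLines K V) h₀)
    (hns : ¬ h₀ ⊆ { p : Projectivization K V |
      ∃ (u : V) (hu : u ≠ 0), p = Projectivization.mk K u hu ∧ ξ u u = 0 }) :
    ¬ IsSubspace (veroBlocks 2 (projLines K V))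
      ({ m : Multiset (Projectivization K V) |
          ∃ p ∈ h₀, m = ({p, p} : Multiset (Projectivization K V)) } ∪ Hxi ξ) := by
  have := nontrivial_of_nonempty_of_ne_univ (Set.nonempty_of_not_subset hns).left hh₀.2.2
  exact stmt_10_general hrefl hns
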